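/- In the pollution control game, the open-loop profile u* with u* i (t) = b i − (Σ_j d j)·(T − t) is a cooperative agreement: for every profile u of admissible controls, Σ_{i} J i (u) ≤ Σ_{i} J i (u*). -/

import Mathlib

/-!
The total payoff depends on the profile through a pointwise concave functional. With
`D = ∑ k, d k`, integration by parts turns the accumulated stock `∫ x_u` into
`x0 * (T - t0) + ∑ j, ∫ (T - t) * u j t` (`integral_primitive_eq`, `integral_state_eq`), so that
`∑ i, J i u = ∑ i, ∫ (b i * u i - u i ^ 2 / 2 - D * (T - t) * u i) - D * x0 * (T - t0)`
(`sum_payoff_eq`). For each `i` and `t` the integrand is a concave parabola in the value of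
`u i t`, with vertex at `b i - D * (T - t)`; hence the profile of vertices is optimal.
-/

open scoped BigOperators
open MeasureTheory intervalIntegral

/-- A control for player `i` is admissible if it is measurable and takes values in
`[0, b i]` almost everywhere on `[t0, T]`. -/
def Admissible (bi t0 T : ℝ) (ui : ℝ → ℝ) : Prop :=
  Measurable ui ∧ ∀ᵐ s ∂(volume.restrict (Set.Icc t0 T)), ui s ∈ Set.Icc 0 bi

/-- The state (total pollution stock) generated by the profile `u` of controls. -/
noncomputable def state {n : ℕ} (x0 t0 : ℝ) (u : Fin n → ℝ → ℝ) (t : ℝ) : ℝ :=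
  x0 + ∫ s in t0..t, ∑ j, u j s

/-- The payoff of player `i` in the pollution control game. -/
noncomputable def payoff {n : ℕ} (b d : Fin n → ℝ) (x0 t0 T : ℝ)
    (i : Fin n) (u : Fin n → ℝ → ℝ) : ℝ :=
  ∫ t in t0..T, (b i * u i t - (1/2) * (u i t)^2 - d i * state x0 t0 u t)

/-- Integration by parts for a merely integrable `f`: its primitive is absolutely continuous, with
derivative `f` almost everywhere. -/
lemma integral_primitive_eq {f : ℝ → ℝ} {a T : ℝ} (hf : IntervalIntegrable f volume a T) :
    ∫ t in a..T, (∫ s in a..t, f s) = ∫ t in a..T, (T - t) * f t := by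
  have hF := hf.absolutelyContinuousOnInterval_intervalIntegral
    (c := a) Set.left_mem_uIcc
  have hg : AbsolutelyContinuousOnInterval (fun t : ℝ => t - T) a T :=
    ContDiffOn.absolutelyContinuousOnInterval (by fun_prop)
  have h := hF.integral_mul_deriv_eq_deriv_mul hg
  have hd : ∀ t : ℝ, deriv (fun t : ℝ => t - T) t = 1 := fun t => by simp
  simp only [hd, mul_one, sub_self, mul_zero, integral_same, zero_mul, zero_sub] at h
  rw [h, ← intervalIntegral.integral_neg]
  apply intervalIntegral.integral_congr_ae
  filter_upwards [hf.ae_hasDerivAt_integral] with t ht htm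
  rw [(ht (Set.uIoc_subset_uIcc htm) a Set.left_mem_uIcc).deriv]
  ring

lemma intervalIntegrable_state {n : ℕ} {x0 t0 T : ℝ} {u : Fin n → ℝ → ℝ}
    (hu : ∀ i, IntervalIntegrable (u i) volume t0 T) :
    IntervalIntegrable (state x0 t0 u) volume t0 T := by
  have hs : IntervalIntegrable (fun s => ∑ j, u j s) volume t0 T := by
    simpa only [Finset.sum_fn] using IntervalIntegrable.sum Finset.univ (fun i _ => hu i)
  exact (continuousOn_const.add
    (continuousOn_primitive_interval' hs Set.left_mem_uIcc)).intervalIntegrable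

lemma integral_state_eq {n : ℕ} {x0 t0 T : ℝ} {u : Fin n → ℝ → ℝ}
    (hu : ∀ i, IntervalIntegrable (u i) volume t0 T) :
    ∫ t in t0..T, state x0 t0 u t
      = x0 * (T - t0) + ∑ j, ∫ t in t0..T, (T - t) * u j t := by
  have hs : IntervalIntegrable (fun s => ∑ j, u j s) volume t0 T := by
    simpa only [Finset.sum_fn] using IntervalIntegrable.sum Finset.univ (fun i _ => hu i)
  have hp : IntervalIntegrable (fun t => ∫ s in t0..t, ∑ j, u j s) volume t0 T :=
    (continuousOn_primitive_interval' hs Set.left_mem_uIcc).intervalIntegrable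
  unfold state
  rw [intervalIntegral.integral_add intervalIntegrable_const hp, integral_primitive_eq hs,
    intervalIntegral.integral_const, smul_eq_mul, mul_comm]
  simp only [Finset.mul_sum]
  rw [intervalIntegral.integral_finsetSum]
  intro i _
  exact (hu i).continuousOn_mul (by fun_prop)

lemma intervalIntegrable_reduced {c D t0 T : ℝ} {v : ℝ → ℝ}
    (hv : IntervalIntegrable v volume t0 T)
    (hv2 : IntervalIntegrable (fun t => v t ^ 2) volume t0 T) :
    IntervalIntegrable (fun t => c * v t - (1/2) * v t ^ 2 - D * ((T - t) * v t))
      volume t0 T :=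
  ((hv.const_mul _).sub (hv2.const_mul _)).sub
    ((hv.continuousOn_mul (by fun_prop)).const_mul _)

/-- The total payoff, with the state eliminated. -/
lemma sum_payoff_eq {n : ℕ} {b d : Fin n → ℝ} {x0 t0 T : ℝ} {u : Fin n → ℝ → ℝ}
    (hu : ∀ i, IntervalIntegrable (u i) volume t0 T)
    (hu2 : ∀ i, IntervalIntegrable (fun t => u i t ^ 2) volume t0 T) :
    ∑ i, payoff b d x0 t0 T i u
      = (∑ i, ∫ t in t0..T,
          (b i * u i t - (1/2) * u i t ^ 2 - (∑ k, d k) * ((T - t) * u i t)))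
        - (∑ k, d k) * (x0 * (T - t0)) := by
  have h0 : ∀ i, IntervalIntegrable (fun t => b i * u i t - (1/2) * u i t ^ 2) volume t0 T :=
    fun i => ((hu i).const_mul _).sub ((hu2 i).const_mul _)
  have h1 : ∀ i, payoff b d x0 t0 T i u
      = (∫ t in t0..T, (b i * u i t - (1/2) * u i t ^ 2))
        - d i * (x0 * (T - t0) + ∑ j, ∫ t in t0..T, (T - t) * u j t) := by
    intro i
    rw [payoff, intervalIntegral.integral_sub (h0 i) ((intervalIntegrable_state hu).const_mul _),
      intervalIntegral.integral_const_mul, integral_state_eq hu]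
  have h2 : ∀ i, ∫ t in t0..T,
        (b i * u i t - (1/2) * u i t ^ 2 - (∑ k, d k) * ((T - t) * u i t))
      = (∫ t in t0..T, (b i * u i t - (1/2) * u i t ^ 2))
        - (∑ k, d k) * ∫ t in t0..T, (T - t) * u i t := by
    intro i
    rw [intervalIntegral.integral_sub (h0 i)
      (((hu i).continuousOn_mul (by fun_prop)).const_mul _), intervalIntegral.integral_const_mul]
  simp only [h1, h2, Finset.sum_sub_distrib, ← Finset.sum_mul, ← Finset.mul_sum]
  ring

lemma Admissible.intervalIntegrable {c t0 T : ℝ} {v : ℝ → ℝ} (hv : Admissible c t0 T v)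
    (h : t0 ≤ T) : IntervalIntegrable v volume t0 T := by
  rw [intervalIntegrable_iff_integrableOn_Icc_of_le h]
  refine Measure.integrableOn_of_bounded (M := c) (by simp) hv.1.aestronglyMeasurable ?_
  filter_upwards [hv.2] with s hs
  rw [Real.norm_of_nonneg hs.1]
  exact hs.2

lemma Admissible.intervalIntegrable_sq {c t0 T : ℝ} {v : ℝ → ℝ} (hv : Admissible c t0 T v)
    (h : t0 ≤ T) : IntervalIntegrable (fun t => v t ^ 2) volume t0 T := by
  rw [intervalIntegrable_iff_integrableOn_Icc_of_le h]
  refine Measure.integrableOn_of_bounded (M := c ^ 2) (by simp)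
    (hv.1.pow_const 2).aestronglyMeasurable ?_
  filter_upwards [hv.2] with s hs
  rw [Real.norm_of_nonneg (sq_nonneg _)]
  exact pow_le_pow_left₀ hs.1 hs.2 2

/-- The open-loop profile `u* i (t) = b i − (Σ_j d j)(T − t)` is a cooperative agreement
of the pollution control game: it maximizes the total payoff over all admissible
profiles. -/
theorem pollution_cooperative_agreement (n : ℕ) (hn : 1 ≤ n) (b d : Fin n → ℝ)
    (hd : ∀ i, 0 < d i) (x0 t0 T : ℝ) (htT : t0 < T)
    (hreg : ∀ i, (∑ j, d j) * (T - t0) ≤ b i) :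
    ∀ u : Fin n → ℝ → ℝ, (∀ i, Admissible (b i) t0 T (u i)) →
      ∑ i, payoff b d x0 t0 T i u
        ≤ ∑ i, payoff b d x0 t0 T i (fun j t => b j - (∑ k, d k) * (T - t)) := by
  intro u hu
  have h1 := fun i => (hu i).intervalIntegrable htT.le
  have h2 := fun i => (hu i).intervalIntegrable_sq htT.le
  have h3 : ∀ i, IntervalIntegrable (fun t => b i - (∑ k, d k) * (T - t)) volume t0 T :=
    fun i => Continuous.intervalIntegrable (by fun_prop) _ _
  have h4 : ∀ i, IntervalIntegrable (fun t => (b i - (∑ k, d k) * (T - t)) ^ 2) volume t0 T :=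
    fun i => Continuous.intervalIntegrable (by fun_prop) _ _
  rw [sum_payoff_eq h1 h2, sum_payoff_eq h3 h4]
  refine sub_le_sub_right (Finset.sum_le_sum fun i _ => ?_) _
  refine intervalIntegral.integral_mono_on htT.le
    (intervalIntegrable_reduced (h1 i) (h2 i)) (intervalIntegrable_reduced (h3 i) (h4 i)) ?_
  intro t _
  -- The difference of the two sides is half the square of the distance to the vertex.
  nlinarith [sq_nonneg (u i t - (b i - (∑ k, d k) * (T - t)))]
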